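/- Let α > 0 and h > 0, and let W₁ : ℝ → ℝ be defined by W₁(y) = e^{−y²/4} − (y/2)∫_y^∞ e^{−ζ²/4} dζ. Then there exists a unique σ ∈ ℝ such that the boundary value problem (1/2)w(y) − (y/2)w′(y) − w″(y) = h for y > σ, w(σ) = 0, w′(σ) = α, admits a bounded solution w; namely σ is the unique solution of W₁(σ)/(−2W₁′(σ)) = h/α, and the bounded solution is w(y) = 2h(1 − W₁(y)/W₁(σ)). Moreover, the map h ↦ σ(h) is C^∞ and strictly decreasing, σ(α/√π) = 0, σ(h) > 0 for 0 < h < α/√π, and σ(h) < 0 for h > α/√π. -/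

import Mathlib

set_option autoImplicit false

open Set Filter

/-- The (extended) function `W₁(y) = e^{-y²/4} - (y/2) ∫_y^∞ e^{-ζ²/4} dζ`. -/
noncomputable def W1ext (y : ℝ) : ℝ :=
  Real.exp (-y ^ 2 / 4) - y / 2 * ∫ ζ in Ioi y, Real.exp (-ζ ^ 2 / 4)

/-- `w` is a bounded solution of the Hermite-type boundary value problem
`(1/2)w - (y/2)w' - w'' = h` on `(σ,∞)`, `w σ = 0`, `w'(σ) = α` (one-sided). -/
def HermiteBVP (α h σ : ℝ) (w : ℝ → ℝ) : Prop :=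
  (∃ M : ℝ, ∀ y : ℝ, σ ≤ y → |w y| ≤ M) ∧
  (∀ y : ℝ, σ < y →
    DifferentiableAt ℝ w y ∧ DifferentiableAt ℝ (deriv w) y ∧
    1 / 2 * w y - y / 2 * deriv w y - deriv (deriv w) y = h) ∧
  w σ = 0 ∧
  derivWithin w (Ici σ) σ = α

noncomputable def gE (y : ℝ) : ℝ := Real.exp (-y ^ 2 / 4)

noncomputable def gG (y : ℝ) : ℝ := ∫ ζ in Ioi y, Real.exp (-ζ ^ 2 / 4)

lemma W1_eq (y : ℝ) : W1ext y = gE y - y / 2 * gG y := rfl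

lemma gE_pos (y : ℝ) : 0 < gE y := Real.exp_pos _

lemma gE_cont : Continuous gE := by unfold gE; fun_prop

lemma gE_int : MeasureTheory.Integrable gE := by
  have := integrable_exp_neg_mul_sq (b := 1 / 4) (by norm_num)
  refine this.congr (Filter.Eventually.of_forall fun x => ?_)
  simp only [gE]; congr 1; ring

lemma gE_deriv (y : ℝ) : HasDerivAt gE (-(y / 2) * gE y) y := by
  have h : HasDerivAt (fun y : ℝ => -y ^ 2 / 4) (-(y / 2)) y := by
    have := ((hasDerivAt_id y).pow 2).neg.div_const 4
    convert! this using 1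
    simp; ring
  have := h.exp
  convert! this using 1
  simp only [gE]; ring

lemma gG_eq (y : ℝ) : gG y = gG 0 - ∫ x in (0 : ℝ)..y, gE x := by
  have := intervalIntegral.integral_interval_add_Ioi (a := 0) (b := y) (f := gE)
    (μ := MeasureTheory.volume) gE_int.integrableOn gE_int.integrableOn
  have h2 : ∀ y, gG y = ∫ x in Ioi y, gE x := fun _ => rfl
  rw [h2, h2]; linarith

lemma gG_deriv (y : ℝ) : HasDerivAt gG (-gE y) y := by
  have h := intervalIntegral.integral_hasDerivAt_right (a := 0) (b := y) (f := gE)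
    (gE_cont.intervalIntegrable _ _) (gE_cont.stronglyMeasurableAtFilter _ _) gE_cont.continuousAt
  have := h.const_sub (gG 0)
  exact this.congr_of_eventuallyEq (Filter.Eventually.of_forall gG_eq)

lemma gG_lim : Tendsto gG atTop (nhds 0) := by
  have h := MeasureTheory.intervalIntegral_tendsto_integral_Ioi (f := gE) 0
    gE_int.integrableOn tendsto_id
  have h2 := (tendsto_const_nhds (x := gG 0)).sub h
  have h3 : gG 0 - (∫ x in Ioi 0, gE x) = 0 := sub_self _
  rw [h3] at h2
  exact h2.congr fun y => (gG_eq y).symm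

lemma gG_zero : gG 0 = Real.sqrt Real.pi := by
  have h := integral_gaussian_Ioi (1 / 4)
  have h2 : gG 0 = ∫ x in Ioi (0 : ℝ), Real.exp (-(1 / 4) * x ^ 2) := by
    unfold gG; congr 1; ext x; congr 1; ring
  rw [h2, h]
  have : Real.pi / (1 / 4) = 2 ^ 2 * Real.pi := by ring
  rw [this, Real.sqrt_mul (by norm_num), Real.sqrt_sq (by norm_num)]; ring

/-- a function with negative derivative and limit zero is positive -/
lemma pos_of_anti {f f' : ℝ → ℝ} (hf : ∀ x, HasDerivAt f (f' x) x) (hn : ∀ x, f' x < 0)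
    (hl : Tendsto f atTop (nhds 0)) (x : ℝ) : 0 < f x := by
  have ha : StrictAnti f := strictAnti_of_deriv_neg fun x => by rw [(hf x).deriv]; exact hn x
  exact lt_of_le_of_lt (ha.antitone.le_of_tendsto hl (x + 1)) (ha (by linarith))

lemma gG_pos (y : ℝ) : 0 < gG y :=
  pos_of_anti gG_deriv (fun x => by linarith [gE_pos x]) gG_lim y

lemma sq_gE_lim : Tendsto (fun y => y ^ 2 * gE y) atTop (nhds 0) := by
  have h := Real.tendsto_pow_mul_exp_neg_atTop_nhds_zero 1
  have h1 : Tendsto (fun y : ℝ => y ^ 2 / 4) atTop atTop :=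
    (tendsto_pow_atTop (by norm_num)).atTop_div_const (by norm_num)
  have h2 := (h.comp h1).const_mul 4
  simp only [mul_zero] at h2
  refine h2.congr fun y => ?_
  simp only [Function.comp, gE, neg_div]; ring

lemma gE_lim : Tendsto gE atTop (nhds 0) := by
  refine squeeze_zero' (Eventually.of_forall fun y => (gE_pos y).le) ?_ sq_gE_lim
  filter_upwards [eventually_ge_atTop 1] with y hy
  have := mul_le_mul_of_nonneg_right (by nlinarith : 1 ≤ y ^ 2) (gE_pos y).le
  linarith

lemma y_gE_lim : Tendsto (fun y => y * gE y) atTop (nhds 0) := by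
  refine squeeze_zero' ?_ ?_ sq_gE_lim
  · filter_upwards [eventually_ge_atTop 1] with y hy
    have := gE_pos y
    positivity
  · filter_upwards [eventually_ge_atTop 1] with y hy
    have := mul_le_mul_of_nonneg_right (by nlinarith : y ≤ y ^ 2) (gE_pos y).le
    exact this

lemma gG_le {y : ℝ} (hy : 1 ≤ y) : gG y ≤ 2 * gE y := by
  have hd : ∀ x, HasDerivAt (fun x => 2 * gE x - gG x) (2 * (-(x / 2) * gE x) - (-gE x)) x :=
    fun x => ((gE_deriv x).const_mul 2).sub (gG_deriv x)
  have ha : AntitoneOn (fun x => 2 * gE x - gG x) (Ici 1) := by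
    apply antitoneOn_of_deriv_nonpos (convex_Ici 1)
    · exact fun x _ => (hd x).continuousAt.continuousWithinAt
    · exact fun x _ => (hd x).differentiableAt.differentiableWithinAt
    · intro x hx
      rw [interior_Ici] at hx
      rw [(hd x).deriv]
      have := gE_pos x
      have hx : 1 < x := hx
      nlinarith
  have hl : Tendsto (fun x => 2 * gE x - gG x) atTop (nhds 0) := by
    have := (gE_lim.const_mul 2).sub gG_lim
    simpa using this
  have : 0 ≤ 2 * gE y - gG y := by
    refine le_of_tendsto hl ?_
    filter_upwards [eventually_ge_atTop y] with x hx
    exact ha hy (hy.trans hx) hx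
  linarith

lemma sq_gG_lim : Tendsto (fun y => y ^ 2 * gG y) atTop (nhds 0) := by
  have h := sq_gE_lim.const_mul 2
  rw [mul_zero] at h
  refine squeeze_zero' (Eventually.of_forall fun y => ?_) ?_ h
  · have := gG_pos y
    positivity
  · filter_upwards [eventually_ge_atTop 1] with y hy
    have := mul_le_mul_of_nonneg_left (gG_le hy) (sq_nonneg y)
    linarith

lemma y_gG_lim : Tendsto (fun y => y * gG y) atTop (nhds 0) := by
  refine squeeze_zero' ?_ ?_ sq_gG_lim
  · filter_upwards [eventually_ge_atTop 1] with y hy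
    have := gG_pos y
    positivity
  · filter_upwards [eventually_ge_atTop 1] with y hy
    exact mul_le_mul_of_nonneg_right (by nlinarith : y ≤ y ^ 2) (gG_pos y).le

lemma W1_deriv (y : ℝ) : HasDerivAt W1ext (-(gG y) / 2) y := by
  have h := (gE_deriv y).sub (((hasDerivAt_id y).div_const 2).mul (gG_deriv y))
  convert! h using 1
  simp only [id]
  ring

lemma W1_lim : Tendsto W1ext atTop (nhds 0) := by
  have h := gE_lim.sub (y_gG_lim.const_mul (1 / 2))
  simp only [mul_zero, sub_zero] at h
  exact h.congr fun y => by rw [W1_eq]; ring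

lemma W1_pos (y : ℝ) : 0 < W1ext y :=
  pos_of_anti W1_deriv (fun x => by linarith [gG_pos x]) W1_lim y

lemma y_W1_lim : Tendsto (fun y => y * W1ext y) atTop (nhds 0) := by
  have h := y_gE_lim.sub (sq_gG_lim.const_mul (1 / 2))
  simp only [mul_zero, sub_zero] at h
  exact h.congr fun y => by rw [W1_eq]; ring

lemma yW1_lt (y : ℝ) : y * W1ext y < gG y := by
  have hd : ∀ x, HasDerivAt (fun x => gG x - x * W1ext x) (-2 * W1ext x) x := fun x => by
    have h := (gG_deriv x).sub ((hasDerivAt_id x).mul (W1_deriv x))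
    convert! h using 1
    simp only [id, W1_eq]
    ring
  have := pos_of_anti hd (fun x => by linarith [W1_pos x])
    (by simpa using gG_lim.sub y_W1_lim) y
  linarith

lemma log_concave (y : ℝ) : gE y * W1ext y < gG y ^ 2 / 2 := by
  have hd : ∀ x, HasDerivAt (fun x => gG x ^ 2 / 2 - gE x * W1ext x)
      (gE x / 2 * (x * W1ext x - gG x)) x := fun x => by
    have h := (((gG_deriv x).pow 2).div_const 2).sub ((gE_deriv x).mul (W1_deriv x))
    convert! h using 1
    simp only [Nat.cast_ofNat]
    ring
  have := pos_of_anti hd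
    (fun x => mul_neg_of_pos_of_neg (by linarith [gE_pos x]) (by linarith [yW1_lt x]))
    (by simpa using ((gG_lim.pow 2).div_const 2).sub (gE_lim.mul W1_lim)) y
  linarith

noncomputable def gR (y : ℝ) : ℝ := W1ext y / gG y

lemma gR_deriv (y : ℝ) :
    HasDerivAt gR ((-(gG y) / 2 * gG y - W1ext y * (-gE y)) / gG y ^ 2) y :=
  (W1_deriv y).div (gG_deriv y) (gG_pos y).ne'

lemma gR_deriv_neg (y : ℝ) : (-(gG y) / 2 * gG y - W1ext y * (-gE y)) / gG y ^ 2 < 0 := by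
  apply div_neg_of_neg_of_pos
  · nlinarith [log_concave y]
  · have := gG_pos y
    positivity

lemma gR_anti : StrictAnti gR :=
  strictAnti_of_deriv_neg fun x => by rw [(gR_deriv x).deriv]; exact gR_deriv_neg x

lemma gR_pos (y : ℝ) : 0 < gR y := div_pos (W1_pos y) (gG_pos y)

lemma gR_cont : Continuous gR :=
  continuous_iff_continuousAt.2 fun x => (gR_deriv x).continuousAt

lemma gR_surj {t : ℝ} (ht : 0 < t) : ∃ s, gR s = t := by
  have h1 : gR (1 / t) ≤ t := by
    unfold gR
    rw [div_le_iff₀ (gG_pos _)]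
    have := mul_le_mul_of_nonneg_left (yW1_lt (1 / t)).le ht.le
    rw [← mul_assoc, mul_one_div_cancel ht.ne', one_mul] at this
    exact this
  have h2 : t ≤ gR (-2 * t) := by
    unfold gR
    rw [le_div_iff₀ (gG_pos _), W1_eq]
    linarith [gE_pos (-2 * t)]
  exact mem_range_of_exists_le_of_exists_ge gR_cont ⟨_, h1⟩ ⟨_, h2⟩

lemma gR_ratio (y : ℝ) : W1ext y / (-2 * deriv W1ext y) = gR y := by
  rw [(W1_deriv y).deriv, gR]; congr 1; ring

lemma gE_smooth : ContDiff ℝ (⊤ : ℕ∞) gE := by unfold gE; fun_prop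

lemma gG_smooth : ContDiff ℝ (⊤ : ℕ∞) gG := by
  rw [contDiff_infty_iff_deriv]
  refine ⟨fun x => (gG_deriv x).differentiableAt, ?_⟩
  rw [show deriv gG = fun x => -gE x from funext fun x => (gG_deriv x).deriv]
  exact gE_smooth.neg

lemma W1_smooth : ContDiff ℝ (⊤ : ℕ∞) W1ext := by
  have : W1ext = fun y => gE y - y / 2 * gG y := rfl
  rw [this]
  exact gE_smooth.sub ((contDiff_id.div_const 2).mul gG_smooth)

lemma gR_smooth : ContDiff ℝ (⊤ : ℕ∞) gR :=
  W1_smooth.div gG_smooth fun x => (gG_pos x).ne'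

noncomputable def gS (t : ℝ) : ℝ := Function.invFun gR t

lemma gR_gS {t : ℝ} (ht : 0 < t) : gR (gS t) = t := Function.invFun_eq (gR_surj ht)

lemma gS_gR (s : ℝ) : gS (gR s) = s := gR_anti.injective (gR_gS (gR_pos s))

lemma gS_smooth {t : ℝ} (ht : 0 < t) : ContDiffAt ℝ (⊤ : ℕ∞) gS t := by
  have hf := gR_smooth.contDiffAt (x := gS t)
  have hd := hf.hasStrictDerivAt' (gR_deriv (gS t)) (by simp)
  have hf' := hd.hasStrictFDerivAt_equiv (gR_deriv_neg (gS t)).ne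
  have h1 := hf.to_localInverse hf'.hasFDerivAt (by simp)
  have h2 := hf'.localInverse_unique (g := gS) (Eventually.of_forall gS_gR)
  rw [gR_gS ht] at h1 h2
  exact h1.congr_of_eventuallyEq h2

lemma const_of_deriv {f : ℝ → ℝ} {σ : ℝ} (hf : ∀ y, σ < y → HasDerivAt f 0 y) :
    ∃ a, ∀ y, σ < y → f y = a :=
  isOpen_Ioi.exists_is_const_of_deriv_eq_zero isPreconnected_Ioi
    (fun y hy => (hf y hy).differentiableAt.differentiableWithinAt)
    (fun y hy => (hf y hy).deriv)

lemma bvp_form {α h σ : ℝ} {w : ℝ → ℝ} (H : HermiteBVP α h σ w) :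
    ∃ c, ∀ y, σ < y → w y = 2 * h + c * W1ext y := by
  obtain ⟨⟨M, hM⟩, hode, -, -⟩ := H
  have hw : ∀ y, σ < y → HasDerivAt w (deriv w y) y := fun y hy => (hode y hy).1.hasDerivAt
  have hw2 : ∀ y, σ < y → HasDerivAt (deriv w) (1 / 2 * w y - y / 2 * deriv w y - h) y :=
    fun y hy => by
      have h1 := (hode y hy).2.1.hasDerivAt
      have h2 := (hode y hy).2.2
      rwa [show deriv (deriv w) y = 1 / 2 * w y - y / 2 * deriv w y - h by linarith] at h1
  obtain ⟨c, hc⟩ := const_of_deriv (f := fun y => (w y - 2 * h - y * deriv w y) / gE y) (σ := σ)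
    (fun y hy => by
      have h := (((hw y hy).sub_const (2 * h)).sub ((hasDerivAt_id y).mul (hw2 y hy))).div
        (gE_deriv y) (gE_pos y).ne'
      convert! h using 1
      have := (gE_pos y).ne'
      simp only [id, Pi.sub_apply, Pi.mul_apply]
      field_simp
      ring)
  have hc' : ∀ y, σ < y → w y - 2 * h - y * deriv w y = c * gE y := fun y hy =>
    (div_eq_iff (gE_pos y).ne').1 (hc y hy)
  obtain ⟨d, hd⟩ := const_of_deriv (f := fun y => deriv w y + c * (gG y / 2)) (σ := σ)
    (fun y hy => by
      have h := (hw2 y hy).add (((gG_deriv y).div_const 2).const_mul c)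
      convert! h using 1
      linarith [hc' y hy])
  have hform : ∀ y, σ < y → w y = 2 * h + d * y + c * W1ext y := fun y hy => by
    have h1 := hc' y hy
    have h2 : deriv w y = d - c * (gG y / 2) := by linarith [hd y hy]
    rw [h2] at h1
    rw [W1_eq]
    linarith
  have hd0 : d = 0 := by
    have hl : Tendsto (fun y => (2 * h + c * W1ext y) * y⁻¹ + d) atTop (nhds d) := by
      have := ((tendsto_const_nhds (x := 2 * h)).add (W1_lim.const_mul c)).mul
        (tendsto_inv_atTop_zero (𝕜 := ℝ))
      simpa using this.add_const d
    have hl0 : Tendsto (fun y => M * y⁻¹) atTop (nhds 0) := by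
      simpa using (tendsto_inv_atTop_zero (𝕜 := ℝ)).const_mul M
    have : |d| ≤ 0 := by
      refine le_of_tendsto_of_tendsto hl.abs hl0 ?_
      filter_upwards [eventually_gt_atTop σ, eventually_gt_atTop 0] with y hy hy0
      have h1 := hM y hy.le
      have h2 : (2 * h + c * W1ext y) * y⁻¹ + d = w y * y⁻¹ := by
        rw [hform y hy]; field_simp; ring
      rw [h2, abs_mul, abs_of_pos (inv_pos.2 hy0)]
      exact mul_le_mul_of_nonneg_right h1 (inv_pos.2 hy0).le
    exact abs_nonpos_iff.1 this
  exact ⟨c, fun y hy => by rw [hform y hy, hd0]; ring⟩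

lemma bvp_unique {α h σ : ℝ} (hα : 0 < α) (hh : 0 < h) {w : ℝ → ℝ} (H : HermiteBVP α h σ w) :
    gR σ = h / α ∧ ∀ y, σ ≤ y → w y = 2 * h * (1 - W1ext y / W1ext σ) := by
  obtain ⟨c, hc⟩ := bvp_form H
  obtain ⟨-, -, h0, h1⟩ := H
  have hdiff : DifferentiableWithinAt ℝ w (Ici σ) σ :=
    differentiableWithinAt_of_derivWithin_ne_zero (by rw [h1]; exact hα.ne')
  have hcont : Tendsto w (nhdsWithin σ (Ioi σ)) (nhds (w σ)) :=
    hdiff.continuousWithinAt.mono Ioi_subset_Ici_self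
  have hcont2 : Tendsto (fun y => 2 * h + c * W1ext y) (nhdsWithin σ (Ioi σ))
      (nhds (2 * h + c * W1ext σ)) :=
    (((W1_deriv σ).continuousAt.const_mul c).const_add (2 * h)).tendsto.mono_left nhdsWithin_le_nhds
  have heq : w σ = 2 * h + c * W1ext σ := by
    refine tendsto_nhds_unique hcont (hcont2.congr' ?_)
    filter_upwards [self_mem_nhdsWithin] with y hy using (hc y hy).symm
  have hall : ∀ y, σ ≤ y → w y = 2 * h + c * W1ext y := fun y hy => by
    rcases hy.eq_or_lt with rfl | hy
    · exact heq
    · exact hc y hy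
  have hW := W1_pos σ
  have hG := gG_pos σ
  have hcv : c = -(2 * h) / W1ext σ := by
    rw [eq_div_iff hW.ne']; linarith
  have hder : derivWithin w (Ici σ) σ = c * (-(gG σ) / 2) := by
    rw [derivWithin_congr (f := fun y => 2 * h + c * W1ext y) (s := Ici σ)
      (fun y hy => hall y hy) heq]
    exact (((W1_deriv σ).const_mul c).const_add (2 * h)).hasDerivWithinAt.derivWithin
      (uniqueDiffOn_Ici σ σ self_mem_Ici)
  refine ⟨?_, fun y hy => ?_⟩
  · rw [h1, hcv] at hder
    rw [gR, hder]
    field_simp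
  · rw [hall y hy, hcv]
    field_simp
    ring

lemma bvp_exists {α h σ : ℝ} (hα : 0 < α) (hh : 0 < h) (hR : gR σ = h / α) :
    HermiteBVP α h σ (fun y => 2 * h * (1 - W1ext y / W1ext σ)) := by
  have hW := W1_pos σ
  have hG := gG_pos σ
  have hd : ∀ y, HasDerivAt (fun y => 2 * h * (1 - W1ext y / W1ext σ))
      (h / W1ext σ * gG y) y := fun y => by
    have := (((W1_deriv y).div_const (W1ext σ)).const_sub 1).const_mul (2 * h)
    convert! this using 1
    field_simp
  have hd1 : deriv (fun y => 2 * h * (1 - W1ext y / W1ext σ)) = fun y => h / W1ext σ * gG y :=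
    funext fun y => (hd y).deriv
  have hd2 : ∀ y, HasDerivAt (fun y => h / W1ext σ * gG y) (h / W1ext σ * (-gE y)) y :=
    fun y => (gG_deriv y).const_mul _
  refine ⟨⟨2 * h, fun y hy => ?_⟩, fun y hy => ⟨(hd y).differentiableAt, ?_, ?_⟩, ?_, ?_⟩
  · have ha : StrictAnti W1ext := strictAnti_of_deriv_neg fun x => by
      rw [(W1_deriv x).deriv]; linarith [gG_pos x]
    have h1 : W1ext y / W1ext σ ≤ 1 := (div_le_one hW).2 (ha.antitone hy)
    have h2 : 0 < W1ext y / W1ext σ := div_pos (W1_pos y) hW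
    rw [abs_of_nonneg (by nlinarith)]
    nlinarith
  · rw [hd1]; exact (hd2 y).differentiableAt
  · rw [hd1, (hd2 y).deriv]
    beta_reduce
    rw [W1_eq y]
    field_simp
    ring
  · simp [hW.ne']
  · rw [(hd σ).hasDerivWithinAt.derivWithin (uniqueDiffOn_Ici σ σ self_mem_Ici)]
    rw [gR, div_eq_div_iff hG.ne' hα.ne'] at hR
    rw [div_mul_eq_mul_div, div_eq_iff hW.ne']
    linarith

/-- **Solvability of the Hermite boundary value problem.**
For `α, h > 0` there is a unique `σ = σ(h)` for which the boundary value problem admits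
a bounded solution; `σ(h)` is the unique solution of `W₁(σ)/(-2W₁'(σ)) = h/α`, the
bounded solution is `w(y) = 2h(1 - W₁(y)/W₁(σ))`, and `h ↦ σ(h)` is `C^∞`, strictly
decreasing, with `σ(α/√Real.pi) = 0`, `σ(h) > 0` for `0 < h < α/√Real.pi` and `σ(h) < 0` for
`h > α/√Real.pi`. -/
theorem hermite_bvp_unique_sigma (α : ℝ) (hα : 0 < α) :
    ∃ sigma : ℝ → ℝ,
      (∀ h : ℝ, 0 < h →
        -- σ(h) solves the shooting equation, uniquely
        W1ext (sigma h) / (-2 * deriv W1ext (sigma h)) = h / α ∧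
        (∀ σ' : ℝ, W1ext σ' / (-2 * deriv W1ext σ') = h / α → σ' = sigma h) ∧
        -- existence of the bounded solution, with the explicit formula
        HermiteBVP α h (sigma h) (fun y => 2 * h * (1 - W1ext y / W1ext (sigma h))) ∧
        -- uniqueness: any bounded solution has σ' = σ(h) and the same formula
        (∀ (σ' : ℝ) (w : ℝ → ℝ), HermiteBVP α h σ' w →
          σ' = sigma h ∧
            ∀ y : ℝ, sigma h ≤ y → w y = 2 * h * (1 - W1ext y / W1ext (sigma h)))) ∧
      ContDiffOn ℝ (⊤ : ℕ∞) sigma (Ioi 0) ∧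
      StrictAntiOn sigma (Ioi 0) ∧
      sigma (α / Real.sqrt Real.pi) = 0 ∧
      (∀ h : ℝ, 0 < h →
        (0 < sigma h ↔ h < α / Real.sqrt Real.pi) ∧ (sigma h < 0 ↔ α / Real.sqrt Real.pi < h)) := by
  have hgR0 : gR 0 = 1 / Real.sqrt Real.pi := by
    rw [gR, gG_zero, W1_eq]; simp [gE]
  have hs : 0 < Real.sqrt Real.pi := Real.sqrt_pos.2 Real.pi_pos
  have hR : ∀ h : ℝ, 0 < h → gR (gS (h / α)) = h / α := fun h hh => gR_gS (div_pos hh hα)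
  refine ⟨fun h => gS (h / α), fun h hh => ⟨?_, ?_, ?_, ?_⟩, ?_, ?_, ?_, fun h hh => ⟨?_, ?_⟩⟩
  · rw [gR_ratio]; exact hR h hh
  · intro σ' hσ
    rw [gR_ratio] at hσ
    show σ' = gS (h / α)
    rw [← hσ, gS_gR]
  · exact bvp_exists hα hh (hR h hh)
  · intro σ' w H
    obtain ⟨h1, h2⟩ := bvp_unique hα hh H
    have h3 : σ' = gS (h / α) := by rw [← h1, gS_gR]
    subst h3
    exact ⟨rfl, h2⟩
  · intro h hh
    have h1 := gS_smooth (div_pos hh hα)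
    exact (h1.comp h (contDiff_id.div_const α).contDiffAt).contDiffWithinAt
  · intro a ha b hb hab
    show gS (b / α) < gS (a / α)
    rw [← gR_anti.lt_iff_gt, hR a ha, hR b hb]
    exact div_lt_div_of_pos_right hab hα
  · show gS (α / Real.sqrt Real.pi / α) = 0
    have : α / Real.sqrt Real.pi / α = gR 0 := by rw [hgR0]; field_simp
    rw [this, gS_gR]
  · show 0 < gS (h / α) ↔ _
    rw [← gR_anti.lt_iff_gt, hR h hh, hgR0, div_lt_div_iff₀ hα hs, lt_div_iff₀ hs, one_mul]
  · show gS (h / α) < 0 ↔ _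
    rw [← gR_anti.lt_iff_gt, hR h hh, hgR0, div_lt_div_iff₀ hs hα, div_lt_iff₀ hs, one_mul]
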